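/- Let a, b ∈ ℝ and let L : (ℝ → ℝ) → (ℝ → ℝ) be scale invariant with exponents a, b, i.e., for all A, B > 0 and all f : ℝ → ℝ, L(x ↦ B f(x/A))(x) = B^b A^a (L f)(x/A). Let M̂ : ℝ × ℝ → ℝ be differentiable, let A, B : ℝ → ℝ be differentiable and strictly positive, let τ : ℝ → ℝ be differentiable and satisfy the time-reparametrization condition τ′(t) = A(τ(t))^a B(τ(t))^{b−1} for all t, and define M(x,t) = B(τ(t)) · M̂(x / A(τ(t)), τ(t)). If M satisfies ∂M/∂t (x,t) = (L M(·,t))(x) for all x, t, then for all y ∈ ℝ and all σ in the range of τ: ∂M̂/∂σ (y,σ) = (L M̂(·,σ))(y) − (B′(σ)/B(σ)) M̂(y,σ) + (A′(σ)/A(σ)) · y · ∂M̂/∂y (y,σ). -/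

import Mathlib

/-!
Freeze the self-similar coordinate `y`, that is, follow the solution at the physical point
`x = A(τ(t)) y`. The chain rule expresses `∂M/∂t` there through the partial derivatives of `M̂`
at `(y, τ(t))`, while scale invariance turns `L M` into `B^b A^a L M̂`. Dividing by `B` leaves
`τ′ (M̂_σ + (B′/B) M̂ - (A′/A) y M̂_y) = A^a B^(b-1) L M̂`, and the canonical time is the one
for which both scalar factors agree.
-/

namespace DynamicRenormalization

section Rescaling

variable {𝕜 E F : Type*} [NontriviallyNormedField 𝕜] [NormedAddCommGroup E] [NormedSpace 𝕜 E]
  [NormedAddCommGroup F] [NormedSpace 𝕜 F]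

/-- The rescaling operator `R_{A,B}`, `(R_{A,B} f)(x) = B f(x / A)`, for functions between vector
spaces; the quotient `x / A` becomes `A⁻¹ • x`. -/
def rescale (A B : 𝕜) (f : E → F) (x : E) : F :=
  B • f (A⁻¹ • x)

theorem rescale_eq_mul_div (A B : 𝕜) (f : 𝕜 → 𝕜) :
    rescale A B f = fun x ↦ B * f (x / A) := by
  ext x
  simp only [rescale, smul_eq_mul, div_eq_inv_mul]

theorem fderiv_prodMk_apply {G : Type*} [NormedAddCommGroup G] [NormedSpace 𝕜 G]
    {f : E × G → F} {x : E} {z : G} (hf : DifferentiableAt 𝕜 f (x, z)) (v : E) (w : G) :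
    fderiv 𝕜 f (x, z) (v, w) =
      fderiv 𝕜 (fun x' ↦ f (x', z)) x v + fderiv 𝕜 (fun z' ↦ f (x, z')) z w := by
  have hleft := hf.hasFDerivAt.comp (f := fun x' ↦ (x', z)) x (hasFDerivAt_prodMk_left x z)
  have hright := hf.hasFDerivAt.comp (f := fun z' ↦ (x, z')) z (hasFDerivAt_prodMk_right x z)
  simp only [Function.comp_def] at hleft hright
  simp [hleft.fderiv, hright.fderiv, ← map_add]

theorem hasDerivAt_inv_smul_smul {A : 𝕜 → 𝕜} {σ : 𝕜} (hA : DifferentiableAt 𝕜 A σ)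
    (hAσ : A σ ≠ 0) (y : E) :
    HasDerivAt (fun s ↦ (A s)⁻¹ • A σ • y) (-(deriv A σ / A σ) • y) σ := by
  refine ((hA.hasDerivAt.fun_inv hAσ).smul_const (A σ • y)).congr_deriv ?_
  rw [smul_smul]
  congr 1
  field_simp

theorem hasDerivAt_rescale {u : E → 𝕜 → F} {A B : 𝕜 → 𝕜} {σ : 𝕜} {y : E}
    (hu : DifferentiableAt 𝕜 (fun p : E × 𝕜 ↦ u p.1 p.2) (y, σ))
    (hA : DifferentiableAt 𝕜 A σ) (hB : DifferentiableAt 𝕜 B σ)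
    (hAσ : A σ ≠ 0) (hBσ : B σ ≠ 0) :
    HasDerivAt (fun s ↦ rescale (A s) (B s) (fun z ↦ u z s) (A σ • y))
      (B σ • (deriv (u y) σ + (deriv B σ / B σ) • u y σ
        - (deriv A σ / A σ) • fderiv 𝕜 (fun z ↦ u z σ) y y)) σ := by
  have hy : (A σ)⁻¹ • A σ • y = y := inv_smul_smul₀ hAσ y
  have hpath : HasDerivAt (fun s ↦ ((A s)⁻¹ • A σ • y, s)) (-(deriv A σ / A σ) • y, 1) σ :=
    (hasDerivAt_inv_smul_smul hA hAσ y).prodMk (hasDerivAt_id σ)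
  have hprofile : HasDerivAt (fun s ↦ u ((A s)⁻¹ • A σ • y) s)
      (deriv (u y) σ - (deriv A σ / A σ) • fderiv 𝕜 (fun z ↦ u z σ) y y) σ := by
    refine (hu.hasFDerivAt.comp_hasDerivAt_of_eq σ hpath (by rw [hy])).congr_deriv ?_
    rw [fderiv_prodMk_apply hu, map_smul, fderiv_apply_one_eq_deriv]
    module
  refine (hB.hasDerivAt.fun_smul hprofile).congr_deriv ?_
  have hcancel : deriv B σ = B σ * (deriv B σ / B σ) := by field_simp
  rw [hy]
  nth_rw 1 [hcancel]
  module

end Rescaling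

section ScaleInvariant

variable {E F : Type*} [NormedAddCommGroup E] [NormedSpace ℝ E]
  [NormedAddCommGroup F] [NormedSpace ℝ F] {a b : ℝ} {L : (E → F) → (E → F)}

/-- Scale invariance of an operator `L` with exponents `a` (for the scale `A` of the variable) and
`b` (for the scale `B` of the values). -/
def IsScaleInvariant (L : (E → F) → (E → F)) (a b : ℝ) : Prop :=
  ∀ ⦃A B : ℝ⦄, 0 < A → 0 < B → ∀ (f : E → F) (x : E),
    L (rescale A B f) x = (B ^ b * A ^ a) • L f (A⁻¹ • x)

theorem isScaleInvariant_iff_mul_div {L : (ℝ → ℝ) → (ℝ → ℝ)} :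
    IsScaleInvariant L a b ↔ ∀ A B : ℝ, 0 < A → 0 < B → ∀ (f : ℝ → ℝ) (x : ℝ),
      L (fun z ↦ B * f (z / A)) x = B ^ b * A ^ a * L f (x / A) := by
  simp only [IsScaleInvariant, rescale_eq_mul_div, smul_eq_mul, div_eq_inv_mul]

theorem IsScaleInvariant.apply_rescale_smul (hL : IsScaleInvariant L a b) {A B : ℝ} (hA : 0 < A)
    (hB : 0 < B) (f : E → F) (y : E) :
    L (rescale A B f) (A • y) = B • (A ^ a * B ^ (b - 1)) • L f y := by
  rw [hL hA hB, inv_smul_smul₀ hA.ne', smul_smul, Real.rpow_sub_one hB.ne']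
  congr 1
  field_simp

theorem IsScaleInvariant.renormalized_equation (hL : IsScaleInvariant L a b)
    {u : E → ℝ → F} {A B τ : ℝ → ℝ} {t τ' : ℝ} {y : E}
    (hu : DifferentiableAt ℝ (fun p : E × ℝ ↦ u p.1 p.2) (y, τ t))
    (hA : DifferentiableAt ℝ A (τ t)) (hB : DifferentiableAt ℝ B (τ t))
    (hApos : 0 < A (τ t)) (hBpos : 0 < B (τ t)) (hτ : HasDerivAt τ τ' t)
    {M : E → ℝ → F} (hM : ∀ x s, M x s = rescale (A (τ s)) (B (τ s)) (fun z ↦ u z (τ s)) x)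
    (hEvol : deriv (M (A (τ t) • y)) t = L (fun x ↦ M x t) (A (τ t) • y)) :
    τ' • (deriv (u y) (τ t) + (deriv B (τ t) / B (τ t)) • u y (τ t)
        - (deriv A (τ t) / A (τ t)) • fderiv ℝ (fun z ↦ u z (τ t)) y y) =
      (A (τ t) ^ a * B (τ t) ^ (b - 1)) • L (fun z ↦ u z (τ t)) y := by
  have hchain := (hasDerivAt_rescale hu hA hB hApos.ne' hBpos.ne').scomp t hτ
  have hpath : M (A (τ t) • y) =
      (fun σ ↦ rescale (A σ) (B σ) (fun z ↦ u z σ) (A (τ t) • y)) ∘ τ := funext fun s ↦ hM _ s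
  have hslice : (fun x ↦ M x t) = rescale (A (τ t)) (B (τ t)) (fun z ↦ u z (τ t)) :=
    funext fun x ↦ hM x t
  rw [hpath, hchain.deriv, hslice, hL.apply_rescale_smul hApos hBpos, smul_comm] at hEvol
  exact smul_right_injective F hBpos.ne' hEvol

end ScaleInvariant

end DynamicRenormalization

open DynamicRenormalization

theorem dynamic_renormalization_canonical_time_general {E F : Type*}
    [NormedAddCommGroup E] [NormedSpace ℝ E] [NormedAddCommGroup F] [NormedSpace ℝ F]
    {a b : ℝ} {L : (E → F) → (E → F)} (hL : IsScaleInvariant L a b)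
    {u : E → ℝ → F} {A B τ : ℝ → ℝ} {t : ℝ} {y : E}
    (hu : DifferentiableAt ℝ (fun p : E × ℝ ↦ u p.1 p.2) (y, τ t))
    (hA : DifferentiableAt ℝ A (τ t)) (hB : DifferentiableAt ℝ B (τ t))
    (hApos : 0 < A (τ t)) (hBpos : 0 < B (τ t))
    (hτ : HasDerivAt τ (A (τ t) ^ a * B (τ t) ^ (b - 1)) t)
    {M : E → ℝ → F} (hM : ∀ x s, M x s = rescale (A (τ s)) (B (τ s)) (fun z ↦ u z (τ s)) x)
    (hEvol : deriv (M (A (τ t) • y)) t = L (fun x ↦ M x t) (A (τ t) • y)) :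
    deriv (u y) (τ t) = L (fun z ↦ u z (τ t)) y - (deriv B (τ t) / B (τ t)) • u y (τ t)
      + (deriv A (τ t) / A (τ t)) • fderiv ℝ (fun z ↦ u z (τ t)) y y := by
  have hfactor : A (τ t) ^ a * B (τ t) ^ (b - 1) ≠ 0 := by positivity
  have hcancel := smul_right_injective F hfactor
    (hL.renormalized_equation hu hA hB hApos hBpos hτ hM hEvol)
  rw [← hcancel]
  abel

/-- Dynamic renormalization with the canonical rescaled time `τ' = A^a B^{b−1}`:
the rescaled solution satisfies
`M̂_σ = L M̂ − (B'/B) M̂ + (A'/A) y M̂_y` at every `σ` in the range of `τ`. -/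
theorem dynamic_renormalization_canonical_time
    (a b : ℝ) (L : (ℝ → ℝ) → (ℝ → ℝ))
    (hL : ∀ A B : ℝ, 0 < A → 0 < B → ∀ (f : ℝ → ℝ) (x : ℝ),
      L (fun z => B * f (z / A)) x = B ^ b * A ^ a * L f (x / A))
    (Mhat : ℝ → ℝ → ℝ)
    (hMhat : Differentiable ℝ (fun p : ℝ × ℝ => Mhat p.1 p.2))
    (A B : ℝ → ℝ) (hA : Differentiable ℝ A) (hB : Differentiable ℝ B)
    (hApos : ∀ σ, 0 < A σ) (hBpos : ∀ σ, 0 < B σ)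
    (τ : ℝ → ℝ) (hτ : Differentiable ℝ τ)
    (hτ' : ∀ t : ℝ, deriv τ t = A (τ t) ^ a * B (τ t) ^ (b - 1))
    (M : ℝ → ℝ → ℝ)
    (hM : ∀ x t : ℝ, M x t = B (τ t) * Mhat (x / A (τ t)) (τ t))
    (hEvol : ∀ x t : ℝ, deriv (fun s => M x s) t = L (fun y => M y t) x) :
    ∀ (y σ : ℝ), σ ∈ Set.range τ →
      deriv (fun s => Mhat y s) σ
        = L (fun z => Mhat z σ) y
          - deriv B σ / B σ * Mhat y σ
          + deriv A σ / A σ * y * deriv (fun z => Mhat z σ) y := by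
  rintro y _ ⟨t, rfl⟩
  simpa [fderiv_eq_smul_deriv, mul_assoc] using dynamic_renormalization_canonical_time_general
    (isScaleInvariant_iff_mul_div.2 hL) (hMhat (y, τ t)) (hA _) (hB _) (hApos _) (hBpos _)
    (hτ' t ▸ (hτ t).hasDerivAt) (M := M) (by simpa only [rescale_eq_mul_div] using hM) (hEvol _ t)
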